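/- Let G be a connected simple graph of order n ≥ 2 with edge connectivity k (1 ≤ k ≤ n − 1) that is not isomorphic to K^k_{n-1,1}. Then m(G,t) ≤ m(K^k_{n-1,1}, t) for all t = 0, 1, …, ⌊n/2⌋, with strict inequality for at least one t. -/

import Mathlib

/-- `matchCount G t` is the number of `t`-matchings of `G`, i.e. the number of
`t`-element sets of pairwise disjoint edges of `G`. -/
noncomputable def matchCount {V : Type*} (G : SimpleGraph V) (t : ℕ) : ℕ :=
  Nat.card {s : Finset (Sym2 V) // ↑s ⊆ G.edgeSet ∧ s.card = t ∧
    (s : Set (Sym2 V)).Pairwise fun e f => ∀ v, ¬(v ∈ e ∧ v ∈ f)}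

/-- The edge connectivity of a graph: the minimum number of edges whose
deletion disconnects the graph. -/
noncomputable def edgeConn {V : Type*} (G : SimpleGraph V) : ℕ :=
  sInf {j | ∃ F : Set (Sym2 V), F ⊆ G.edgeSet ∧ F.ncard = j ∧ ¬(G.deleteEdges F).Connected}

/-- The edge cut `∂(S)`: the set of edges of `G` with exactly one endpoint in `S`. -/
def edgeCut {V : Type*} (G : SimpleGraph V) (S : Set V) : Set (Sym2 V) :=
  {e | e ∈ G.edgeSet ∧ ∃ u ∈ S, ∃ v, v ∉ S ∧ e = s(u, v)}

/-- `Kstar n k` is the graph `K^k_{n-1,1}`: obtained from `K_1 ∪ K_{n-1}` by adding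
`k` edges joining the vertex of `K_1` (vertex `n-1`) to `k` distinct vertices of `K_{n-1}`. -/
def Kstar (n k : ℕ) : SimpleGraph (Fin n) :=
  SimpleGraph.fromRel (fun u v =>
    (u.val < n - 1 ∧ v.val < n - 1) ∨ (u.val < k ∧ v.val = n - 1))

/-- `Kmk n m k` is the graph `K^k_{n-m,m}`: obtained from `K_{n-m} ∪ K_m` by adding
`k` independent edges between the two parts. -/
def Kmk (n m k : ℕ) : SimpleGraph (Fin n) :=
  SimpleGraph.fromRel (fun u v =>
    (u.val < n - m ∧ v.val < n - m) ∨ (n - m ≤ u.val ∧ n - m ≤ v.val) ∨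
    (u.val < k ∧ v.val = n - m + u.val))

/-- The Hosoya index: the total number of matchings of `G`. -/
noncomputable def hosoya {V : Type*} [Fintype V] (G : SimpleGraph V) : ℕ :=
  ∑ t ∈ Finset.range (Fintype.card V / 2 + 1), matchCount G t

/-!
Let `H` consist of complete graphs on `A` and on its complement, together with `k` crossing edges,
and write `κ S` for the number of matchings of the complete graph minus `S` of the size at hand.
A minimum edge cut embeds `G` in such an `H`, and when one side is a single vertex, `H` is
`K^k_{n-1,1}`. Otherwise pick `x ∈ A` and a crossing edge `pu` with `u ∉ A` and `p ≠ x`. Counting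
by the partner of `x`, a copy of `K^k_{n-1,1}` with centre `x` has exactly `κ {x} + k * κ {x, u}`
matchings of each positive size, so it suffices to bound those of `H` by this number.

The matchings of `H` that use a crossing edge at `x` cost at most `κ {x, u}` for each such edge. If
`x` is matched to `w ∈ A`, sort by the partner of `u`.
* If `u` is unmatched and `wu` is not an edge, replace `xw` by the missing edge `wu`; together with
  the matchings that avoid `x` these number at most `κ {x}`.
* If `u` is unmatched and `wu` is an edge, or if `u` is matched to `p ∈ A`, replace `xw, up` by
  `wp`. For each crossing edge at `u` this counts every matching of `H - x - u` at most once.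
* If `u` is matched to `v ∉ A`, replace `xw, uv` by `wv`. The pairs `wv` that are not edges of `H`
  only fill the gap between the matchings of `H - x - u` and `κ {x, u}`, and each pair that is a
  crossing edge costs at most `κ {x, u}`.

Every crossing edge is charged at most once: it meets `x`, it meets `u`, or it misses both.
Strictness is already visible in the number of edges.
-/

open Finset

section Matchings

variable {V : Type*} {G H : SimpleGraph V}

/-- The graph `G - S`, kept on the vertex type `V`: the vertices of `S` become isolated, which
does not affect matchings. An edge `e : Sym2 V` is coerced to `Set V` in `isolate G e`. -/
def isolate (G : SimpleGraph V) (S : Set V) : SimpleGraph V where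
  Adj v w := G.Adj v w ∧ v ∉ S ∧ w ∉ S
  symm := ⟨fun _ _ h => ⟨h.1.symm, h.2.2, h.2.1⟩⟩
  loopless := ⟨fun _ h => G.irrefl h.1⟩

lemma isolate_isolate (G : SimpleGraph V) (S T : Set V) :
    isolate (isolate G S) T = isolate G (S ∪ T) := by
  ext v w
  simp only [isolate, Set.mem_union]
  tauto

lemma isolate_le (G : SimpleGraph V) (S : Set V) : isolate G S ≤ G := fun _ _ h => h.1

lemma isolate_mono (h : G ≤ H) (S : Set V) : isolate G S ≤ isolate H S :=
  fun _ _ hvw => ⟨h hvw.1, hvw.2⟩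

lemma mem_edgeSet_isolate {S : Set V} {e : Sym2 V} :
    e ∈ (isolate G S).edgeSet ↔ e ∈ G.edgeSet ∧ ∀ v ∈ e, v ∉ S := by
  induction e with
  | _ a b => simp [isolate]

lemma matchCount_le_of_embedding {W : Type*} [Finite W] {K : SimpleGraph W} (f : V ↪ W)
    (hf : ∀ v w, G.Adj v w → K.Adj (f v) (f w)) (t : ℕ) : matchCount G t ≤ matchCount K t := by
  refine Nat.card_le_card_of_injective (fun s => ⟨s.1.map f.sym2Map, ?_, ?_, ?_⟩) ?_
  · simp only [coe_map, Set.image_subset_iff]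
    rintro ⟨v, w⟩ he
    exact hf v w (s.2.1 he)
  · rw [card_map, s.2.2.1]
  · rw [coe_map, f.sym2Map.injective.injOn.pairwise_image]
    intro e he e' he' hne v hv
    simp only [Function.Embedding.sym2Map_apply, Sym2.mem_map] at hv
    obtain ⟨⟨a, ha, rfl⟩, b, hb, hba⟩ := hv
    exact s.2.2.2 he he' hne a ⟨ha, f.injective hba ▸ hb⟩
  · exact fun s s' h => Subtype.ext (map_injective _ (congrArg Subtype.val h))

variable [Finite V]

lemma matchCount_mono (h : G ≤ H) (t : ℕ) : matchCount G t ≤ matchCount H t :=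
  matchCount_le_of_embedding (.refl V) (fun _ _ hvw => h hvw) t

lemma matchCount_isolate_top_pair_le {x u v : V} (hv : v ≠ x) (t : ℕ) :
    matchCount (isolate ⊤ ({x, v} : Set V)) t ≤ matchCount (isolate ⊤ ({x, u} : Set V)) t := by
  classical
  refine matchCount_le_of_embedding (Equiv.swap u v).toEmbedding (fun a b hab => ?_) t
  simp only [isolate, SimpleGraph.top_adj, Set.mem_insert_iff, Set.mem_singleton_iff,
    Equiv.coe_toEmbedding, Equiv.swap_apply_def] at hab ⊢
  grind

/-- The finset of `t`-matchings of `G`, counted by `matchCount`. -/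
noncomputable def matchings (G : SimpleGraph V) (t : ℕ) : Finset (Finset (Sym2 V)) :=
  (Set.toFinite {s : Finset (Sym2 V) | ↑s ⊆ G.edgeSet ∧ s.card = t ∧
    (s : Set (Sym2 V)).Pairwise fun e f => ∀ v, ¬(v ∈ e ∧ v ∈ f)}).toFinset

lemma mem_matchings {t : ℕ} {s : Finset (Sym2 V)} :
    s ∈ matchings G t ↔ ↑s ⊆ G.edgeSet ∧ s.card = t ∧
      (s : Set (Sym2 V)).Pairwise fun e f => ∀ v, ¬(v ∈ e ∧ v ∈ f) := by
  simp [matchings]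

lemma card_matchings (G : SimpleGraph V) (t : ℕ) :
    #(matchings G t) = matchCount G t := by
  simp_rw [matchCount, ← mem_matchings, Nat.card_eq_fintype_card, Fintype.card_coe]

lemma matchCount_zero (G : SimpleGraph V) : matchCount G 0 = 1 := by
  rw [← card_matchings, card_eq_one]
  refine ⟨∅, ext fun s => ?_⟩
  simp only [mem_matchings, card_eq_zero, mem_singleton]
  exact ⟨fun h => h.2.1, by rintro rfl; simp⟩

lemma notMem_of_mem_matchings_isolate {e : Sym2 V} {s : Finset (Sym2 V)} {t : ℕ}
    (hs : s ∈ matchings (isolate G e) t) : e ∉ s := by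
  intro he
  have hdisj := (mem_edgeSet_isolate.1 ((mem_matchings.1 hs).1 he)).2
  induction e with
  | _ a b => exact hdisj a (Sym2.mem_mk_left a b) (Sym2.mem_mk_left a b)

lemma insert_mem_matchings_iff [DecidableEq V] {e : Sym2 V} {s : Finset (Sym2 V)} {t : ℕ}
    (he : e ∉ s) :
    insert e s ∈ matchings G (t + 1) ↔ e ∈ G.edgeSet ∧ s ∈ matchings (isolate G e) t := by
  have : Std.Symm fun e f : Sym2 V => ∀ v, ¬(v ∈ e ∧ v ∈ f) :=
    ⟨fun _ _ h v hv => h v hv.symm⟩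
  have hsub : (s : Set (Sym2 V)) ⊆ (isolate G e).edgeSet ↔
      ↑s ⊆ G.edgeSet ∧ ∀ f ∈ (s : Set (Sym2 V)), ∀ v, ¬(v ∈ e ∧ v ∈ f) := by
    simp only [Set.subset_def, mem_edgeSet_isolate, SetLike.mem_coe]
    grind
  rw [mem_matchings, mem_matchings, hsub, coe_insert, Set.insert_subset_iff,
    card_insert_of_notMem he, Set.pairwise_insert_of_symm_of_notMem (mem_coe.not.2 he),
    Nat.add_left_inj]
  tauto

lemma card_matchings_filter_mem_le [DecidableEq V] (G : SimpleGraph V) (e : Sym2 V) (t : ℕ) :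
    #{s ∈ matchings G (t + 1) | e ∈ s} ≤ matchCount (isolate G e) t := by
  rw [← card_matchings]
  refine card_le_card_of_injOn (·.erase e) (fun s hs => ?_) ?_
  · obtain ⟨hs, he⟩ := mem_filter.1 hs
    rw [← insert_erase he] at hs
    exact ((insert_mem_matchings_iff (notMem_erase e s)).1 hs).2
  · exact (erase_injOn' e).mono fun s hs => (mem_filter.1 hs).2

lemma matchCount_succ_le_add_sum {x : V} {W : Finset V} (hW : ∀ w, G.Adj x w → w ∈ W) (t : ℕ) :
    matchCount G (t + 1) ≤
      matchCount (isolate G {x}) (t + 1) + ∑ w ∈ W, matchCount (isolate G {x, w}) t := by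
  classical
  have hcover : matchings G (t + 1) ⊆ matchings (isolate G {x}) (t + 1) ∪
      W.biUnion fun w => {s ∈ matchings G (t + 1) | s(x, w) ∈ s} := by
    intro s hs
    simp only [mem_union, mem_biUnion, mem_filter]
    by_cases hx : ∃ w, s(x, w) ∈ s
    · obtain ⟨w, hw⟩ := hx
      exact .inr ⟨w, hW w ((mem_matchings.1 hs).1 hw), hs, hw⟩
    · rw [mem_matchings] at hs
      refine .inl (mem_matchings.2 ⟨fun e he => mem_edgeSet_isolate.2 ⟨hs.1 he, ?_⟩, hs.2⟩)
      rintro v hv rfl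
      obtain ⟨w, rfl⟩ := Sym2.mem_iff_exists.1 hv
      exact hx ⟨w, he⟩
  calc matchCount G (t + 1)
      ≤ #(matchings (isolate G {x}) (t + 1)) +
          ∑ w ∈ W, #{s ∈ matchings G (t + 1) | s(x, w) ∈ s} := by
        rw [← card_matchings]
        exact (card_le_card hcover).trans
          ((card_union_le _ _).trans (Nat.add_le_add_left card_biUnion_le _))
    _ ≤ _ := by
        rw [card_matchings]
        gcongr with w
        simpa only [Sym2.coe_mk] using card_matchings_filter_mem_le G s(x, w) t

/-- Adjoining one new edge `e i` to a `t`-matching of `G` that avoids it gives a matching of `H`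
that determines `i`, because `e i` is its only edge outside `G`. -/
lemma matchCount_add_sum_le {ι : Type*} {I : Finset ι} {e : ι → Sym2 V} (hGH : G ≤ H)
    (he : Set.InjOn e I) (heH : ∀ i ∈ I, e i ∈ H.edgeSet) (heG : ∀ i ∈ I, e i ∉ G.edgeSet) (t : ℕ) :
    matchCount G (t + 1) + ∑ i ∈ I, matchCount (isolate G (e i)) t ≤ matchCount H (t + 1) := by
  classical
  let extended (i : ι) : Finset (Finset (Sym2 V)) :=
    (matchings (isolate G (e i)) t).image (insert (e i))
  have hext {i : ι} {s : Finset (Sym2 V)} (hs : s ∈ matchings (isolate G (e i)) t) :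
      ↑s ⊆ G.edgeSet := (mem_matchings.1 hs).1.trans fun f hf => (mem_edgeSet_isolate.1 hf).1
  have hcard (i : ι) : #(extended i) = matchCount (isolate G (e i)) t := by
    rw [← card_matchings]
    refine card_image_of_injOn fun s hs s' hs' h => ?_
    rw [← erase_insert (notMem_of_mem_matchings_isolate hs), h,
      erase_insert (notMem_of_mem_matchings_isolate hs')]
  have hdisj : (I : Set ι).PairwiseDisjoint extended := by
    intro i hi j hj hij
    simp only [Function.onFun, extended, disjoint_left, mem_image, not_exists, not_and]
    rintro _ ⟨s, -, rfl⟩ s' hs' h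
    rcases mem_insert.1 (h ▸ mem_insert_self (e i) s) with h | h
    · exact hij (he hi hj h)
    · exact heG i hi (hext hs' h)
  have hdisjG : Disjoint (matchings G (t + 1)) (I.biUnion extended) := by
    simp only [extended, disjoint_left, mem_biUnion, mem_image, not_exists, not_and]
    rintro _ hs i hi s - rfl
    exact heG i hi ((mem_matchings.1 hs).1 (mem_insert_self _ _))
  have hsub : matchings G (t + 1) ∪ I.biUnion extended ⊆ matchings H (t + 1) := by
    refine union_subset (fun s hs => ?_) (biUnion_subset.2 fun i hi => ?_)
    · rw [mem_matchings] at hs ⊢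
      exact ⟨hs.1.trans (SimpleGraph.edgeSet_mono hGH), hs.2⟩
    · refine image_subset_iff.2 fun s hs => ?_
      rw [insert_mem_matchings_iff (notMem_of_mem_matchings_isolate hs)]
      refine ⟨heH i hi, mem_matchings.2 ⟨(mem_matchings.1 hs).1.trans ?_, (mem_matchings.1 hs).2⟩⟩
      exact SimpleGraph.edgeSet_mono (isolate_mono hGH _)
  simp_rw [← hcard]
  rw [← card_matchings, ← card_matchings, ← card_biUnion hdisj, ← card_union_of_disjoint hdisjG]
  exact card_le_card hsub

lemma add_sum_le_matchCount_succ {x : V} {W : Finset V} (hW : ∀ w ∈ W, G.Adj x w) (t : ℕ) :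
    matchCount (isolate G {x}) (t + 1) + ∑ w ∈ W, matchCount (isolate G {x, w}) t ≤
      matchCount G (t + 1) := by
  have := matchCount_add_sum_le (e := fun w => s(x, w)) (isolate_le G {x})
    (fun _ _ _ _ h => Sym2.congr_right.1 h) hW (by simp [isolate]) t
  simpa only [isolate_isolate, Sym2.coe_mk, Set.singleton_union, Set.insert_eq_of_mem,
    Set.mem_insert_iff, true_or] using this

lemma matchCount_one_lt_of_lt (h : G < H) : matchCount G 1 < matchCount H 1 := by
  obtain ⟨e, heH, heG⟩ := Set.exists_of_ssubset (SimpleGraph.edgeSet_strict_mono h)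
  have := matchCount_add_sum_le (I := {e}) (e := id) h.le (Set.injOn_id _) (by simpa) (by simpa) 0
  rwa [sum_singleton, matchCount_zero] at this

end Matchings

section TwoCliques

variable {V : Type*} {A : Finset V} {F : Finset (V × V)} {x u : V}

/-- The union of the complete graphs on `A` and on its complement, together with the edges given by
the pairs in `F`; in all uses `F` consists of pairs in `A ×ˢ Aᶜ`. In particular
`twoCliques {x} ({x} ×ˢ N)`, with `x ∉ N`, is a copy of `K^k_{n-1,1}` for `k = #N`. -/
def twoCliques (A : Finset V) (F : Finset (V × V)) : SimpleGraph V :=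
  SimpleGraph.fromRel fun v w => (v ∈ A ↔ w ∈ A) ∨ (v, w) ∈ F

lemma twoCliques_adj_of_mem {v w : V} (hv : v ∈ A) (hw : w ∈ A) (hne : v ≠ w) :
    (twoCliques A F).Adj v w := by
  simp [twoCliques, hv, hw, hne]

lemma add_sum_le_matchCount_isolate_twoCliques [Finite V] [DecidableEq V] (hu : u ∉ A) {p : V}
    (hp : p ∈ A.erase x) (t : ℕ) :
    matchCount (isolate (twoCliques A F) {x, u, p}) (t + 1) +
        ∑ w ∈ (A.erase x).erase p, matchCount (isolate (twoCliques A F) {x, u, p, w}) t ≤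
      matchCount (isolate (twoCliques A F) {x, u}) (t + 1) := by
  have := add_sum_le_matchCount_succ (G := isolate (twoCliques A F) {x, u}) (x := p)
    (W := (A.erase x).erase p) (fun w hw => ⟨?_, ?_, ?_⟩) t
  · simpa only [isolate_isolate, Set.insert_union, Set.singleton_union] using this
  · exact twoCliques_adj_of_mem (by grind) (by grind) (by grind)
  · grind
  · grind

lemma add_card_mul_le_matchCount_twoCliques_singleton [Finite V] {N : Finset V}
    (hxN : x ∉ N) (hu : u ≠ x) (t : ℕ) :
    matchCount (isolate ⊤ ({x} : Set V)) (t + 1) +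
        #N * matchCount (isolate ⊤ ({x, u} : Set V)) t ≤
      matchCount (twoCliques {x} ({x} ×ˢ N)) (t + 1) := by
  have hisolate (S : Set V) (hS : x ∈ S) :
      isolate (twoCliques {x} ({x} ×ˢ N)) S = isolate ⊤ S := by
    ext v w
    simp only [isolate, twoCliques, SimpleGraph.fromRel_adj, SimpleGraph.top_adj, mem_singleton]
    grind
  have hstar := add_sum_le_matchCount_succ (G := twoCliques {x} ({x} ×ˢ N)) (x := x) (W := N)
    (fun w hw => by simp [twoCliques, hw, (ne_of_mem_of_not_mem hw hxN).symm]) t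
  simp only [hisolate _ (Set.mem_singleton x), hisolate _ (Set.mem_insert x _)] at hstar
  refine le_trans (Nat.add_le_add_left (card_nsmul_le_sum N _ _ fun w _ => ?_) _) hstar
  exact matchCount_isolate_top_pair_le hu t

variable [Fintype V] [DecidableEq V]

lemma twoCliques_adj_iff_of_mem_of_notMem (hF : F ⊆ A ×ˢ Aᶜ) {v w : V} (hv : v ∈ A) (hw : w ∉ A) :
    (twoCliques A F).Adj v w ↔ (v, w) ∈ F := by
  have : (w, v) ∉ F := fun h => hw (mem_product.1 (hF h)).1
  simp [twoCliques, hv, hw, this, ne_of_mem_of_not_mem hv hw]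

lemma matchCount_twoCliques_succ_le (hF : F ⊆ A ×ˢ Aᶜ) (hx : x ∈ A) (t : ℕ) :
    matchCount (twoCliques A F) (t + 1) ≤
      matchCount (isolate (twoCliques A F) {x}) (t + 1) +
        ∑ w ∈ A.erase x, matchCount (isolate (twoCliques A F) {x, w}) t +
        ∑ v with (x, v) ∈ F, matchCount (isolate (twoCliques A F) {x, v}) t := by
  have hdisj : Disjoint (A.erase x) ({v | (x, v) ∈ F} : Finset V) := by
    simp only [disjoint_left, mem_erase, mem_filter_univ]
    exact fun v hv hvF => mem_compl.1 (mem_product.1 (hF hvF)).2 hv.2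
  rw [add_assoc, ← sum_union hdisj]
  refine matchCount_succ_le_add_sum (fun w hw => ?_) t
  by_cases hwA : w ∈ A
  · simp [hwA, hw.ne']
  · simp [(twoCliques_adj_iff_of_mem_of_notMem hF hx hwA).1 hw]

lemma matchCount_isolate_twoCliques_add_sum_le (hF : F ⊆ A ×ˢ Aᶜ) {S : Set V}
    {E : Finset (V × V)} (hE : E ⊆ A ×ˢ Aᶜ) (hEF : Disjoint E F)
    (hES : ∀ f ∈ E, f.1 ∉ S ∧ f.2 ∉ S) (t : ℕ) :
    matchCount (isolate (twoCliques A F) S) (t + 1) +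
        ∑ f ∈ E, matchCount (isolate (twoCliques A F) (S ∪ {f.1, f.2})) t ≤
      matchCount (isolate ⊤ S) (t + 1) := by
  have hmem {f : V × V} (hf : f ∈ E) : f.1 ∈ A ∧ f.2 ∉ A := by simpa using hE hf
  have := matchCount_add_sum_le (e := fun f : V × V => s(f.1, f.2)) (I := E)
    (isolate_mono le_top S : isolate (twoCliques A F) S ≤ isolate ⊤ S) ?_ ?_ ?_ t
  · simpa only [isolate_isolate, Sym2.coe_mk] using this
  · rintro ⟨v, w⟩ hf ⟨v', w'⟩ hf' h
    have := hmem hf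
    have := hmem hf'
    grind [Sym2.eq_iff]
  · exact fun f hf => ⟨ne_of_mem_of_not_mem (hmem hf).1 (hmem hf).2, hES f hf⟩
  · exact fun f hf h => disjoint_left.1 hEF hf
      ((twoCliques_adj_iff_of_mem_of_notMem hF (hmem hf).1 (hmem hf).2).1 h.1)

lemma matchCount_isolate_twoCliques_pair_succ_le (hF : F ⊆ A ×ˢ Aᶜ) (hu : u ∉ A) (w : V) (t : ℕ) :
    matchCount (isolate (twoCliques A F) {x, w}) (t + 1) ≤
      matchCount (isolate (twoCliques A F) {x, u, w}) (t + 1) +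
        ∑ p ∈ {p ∈ A.erase x | (p, u) ∈ F}.erase w,
          matchCount (isolate (twoCliques A F) {x, u, p, w}) t +
        ∑ v ∈ Aᶜ.erase u, matchCount (isolate (twoCliques A F) {x, u, w, v}) t := by
  have hdisj : Disjoint ({p ∈ A.erase x | (p, u) ∈ F}.erase w) (Aᶜ.erase u) := by
    simp only [disjoint_left, mem_erase, mem_filter, mem_compl]
    tauto
  have := matchCount_succ_le_add_sum (G := isolate (twoCliques A F) {x, w}) (x := u)
    (W := {p ∈ A.erase x | (p, u) ∈ F}.erase w ∪ Aᶜ.erase u) (fun v hv => ?_) t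
  · have hw : ({x, w} ∪ {u} : Set V) = {x, u, w} := by grind
    have hpw (p : V) : ({x, w} ∪ {u, p} : Set V) = {x, u, p, w} := by grind
    have hwv (v : V) : ({x, w} ∪ {u, v} : Set V) = {x, u, w, v} := by grind
    rw [sum_union hdisj, ← add_assoc] at this
    simpa only [isolate_isolate, hw, hpw, ← hwv] using this
  · simp only [isolate, Set.mem_insert_iff, Set.mem_singleton_iff, not_or] at hv
    have hadj (hvA : v ∈ A) := twoCliques_adj_iff_of_mem_of_notMem hF hvA hu
    grind [SimpleGraph.adj_comm, mem_compl, hv.1.ne]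

lemma sum_matchCount_isolate_twoCliques_pair_le (hF : F ⊆ A ×ˢ Aᶜ) (hu : u ∉ A) (t : ℕ) :
    ∑ w ∈ A.erase x, matchCount (isolate (twoCliques A F) {x, w}) (t + 1) ≤
      ∑ w ∈ A.erase x with (w, u) ∉ F, matchCount (isolate (twoCliques A F) {x, u, w}) (t + 1) +
        #{p ∈ A.erase x | (p, u) ∈ F} * matchCount (isolate (twoCliques A F) {x, u}) (t + 1) +
        ∑ f ∈ A.erase x ×ˢ Aᶜ.erase u,
          matchCount (isolate (twoCliques A F) {x, u, f.1, f.2}) t := by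
  set H := twoCliques A F
  set P : Finset V := {p ∈ A.erase x | (p, u) ∈ F}
  have hswap : ∑ w ∈ A.erase x, ∑ p ∈ P.erase w, matchCount (isolate H {x, u, p, w}) t =
      ∑ p ∈ P, ∑ w ∈ (A.erase x).erase p, matchCount (isolate H {x, u, p, w}) t :=
    sum_comm' fun w p => by grind
  have hPsum : ∑ p ∈ P, (matchCount (isolate H {x, u, p}) (t + 1) +
      ∑ w ∈ (A.erase x).erase p, matchCount (isolate H {x, u, p, w}) t) ≤
      #P * matchCount (isolate H {x, u}) (t + 1) := by
    rw [← smul_eq_mul]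
    exact sum_le_card_nsmul _ _ _ fun p hp =>
      add_sum_le_matchCount_isolate_twoCliques hu (mem_filter.1 hp).1 t
  have hexpand := sum_le_sum fun w (_ : w ∈ A.erase x) =>
    matchCount_isolate_twoCliques_pair_succ_le (x := x) hF hu w t
  rw [sum_add_distrib, sum_add_distrib, hswap, ← sum_product',
    ← sum_filter_add_sum_filter_not (A.erase x) (fun w => (w, u) ∈ F)
      fun w => matchCount (isolate H {x, u, w}) (t + 1)] at hexpand
  rw [sum_add_distrib] at hPsum
  linarith

lemma mul_add_sum_matchCount_isolate_twoCliques_le (hF : F ⊆ A ×ˢ Aᶜ) (hx : x ∈ A) (hu : u ∉ A)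
    {m : ℕ} (hm : 1 ≤ m) (t : ℕ) :
    m * matchCount (isolate (twoCliques A F) {x, u}) (t + 1) +
        ∑ f ∈ A.erase x ×ˢ Aᶜ.erase u, matchCount (isolate (twoCliques A F) {x, u, f.1, f.2}) t ≤
      (m + #{f ∈ F | f.1 ≠ x ∧ f.2 ≠ u}) * matchCount (isolate ⊤ ({x, u} : Set V)) (t + 1) := by
  set H := twoCliques A F
  set κ := matchCount (isolate ⊤ ({x, u} : Set V)) (t + 1)
  have hnonedges : matchCount (isolate H {x, u}) (t + 1) +
      ∑ f ∈ A.erase x ×ˢ Aᶜ.erase u with f ∉ F, matchCount (isolate H {x, u, f.1, f.2}) t ≤ κ := by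
    have := matchCount_isolate_twoCliques_add_sum_le hF (S := {x, u})
      (E := {f ∈ A.erase x ×ˢ Aᶜ.erase u | f ∉ F}) (by grind [mem_compl])
      (by grind [disjoint_left]) (by grind [mem_compl]) t
    simpa only [Set.insert_union, Set.singleton_union] using this
  have hedge (f : V × V) (hf : f ∈ A.erase x ×ˢ Aᶜ.erase u) :
      matchCount (isolate H {x, u, f.1, f.2}) t ≤ κ := by
    have := add_sum_le_matchCount_succ (G := isolate ⊤ {x, u}) (x := f.1) (W := {f.2})
      (by
        simp only [isolate, SimpleGraph.top_adj, mem_singleton, Set.mem_insert_iff,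
          Set.mem_singleton_iff]
        grind [mem_compl]) t
    rw [sum_singleton, isolate_isolate _ _ {f.1, f.2}, Set.insert_union,
      Set.singleton_union] at this
    exact (matchCount_mono (isolate_mono le_top _) t).trans (le_of_add_le_right this)
  have hedges : ∑ f ∈ A.erase x ×ˢ Aᶜ.erase u with f ∈ F,
      matchCount (isolate H {x, u, f.1, f.2}) t ≤ #{f ∈ F | f.1 ≠ x ∧ f.2 ≠ u} * κ := by
    have hindex : {f ∈ A.erase x ×ˢ Aᶜ.erase u | f ∈ F} = {f ∈ F | f.1 ≠ x ∧ f.2 ≠ u} := by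
      grind
    rw [← hindex, ← smul_eq_mul]
    exact sum_le_card_nsmul _ _ _ fun f hf => hedge f (mem_filter.1 hf).1
  have hle : matchCount (isolate H {x, u}) (t + 1) ≤ κ :=
    matchCount_mono (isolate_mono le_top _) _
  obtain ⟨m, rfl⟩ := Nat.exists_eq_add_of_le' hm
  rw [← sum_filter_add_sum_filter_not _ fun f => f ∈ F]
  nlinarith [Nat.mul_le_mul_left m hle]

lemma matchCount_isolate_twoCliques_singleton_add_sum_le (hF : F ⊆ A ×ˢ Aᶜ) (hx : x ∈ A)
    (hu : u ∉ A) (t : ℕ) :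
    matchCount (isolate (twoCliques A F) {x}) (t + 1) +
        ∑ w ∈ A.erase x with (w, u) ∉ F, matchCount (isolate (twoCliques A F) {x, u, w}) t ≤
      matchCount (isolate ⊤ ({x} : Set V)) (t + 1) := by
  have hE : (({w ∈ A.erase x | (w, u) ∉ F} : Finset V) ×ˢ {u}) ⊆ A ×ˢ Aᶜ := by grind [mem_compl]
  have := matchCount_isolate_twoCliques_add_sum_le hF (S := {x}) hE (by grind [disjoint_left])
    (by grind) t
  rw [sum_product] at this
  simpa only [sum_singleton, Set.singleton_union, Set.pair_comm _ u] using this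

lemma card_filter_fst_add_card_filter_snd_add_card_filter_le (F : Finset (V × V)) (A : Finset V)
    (x u : V) :
    #{v | (x, v) ∈ F} + #{p ∈ A.erase x | (p, u) ∈ F} + #{f ∈ F | f.1 ≠ x ∧ f.2 ≠ u} ≤ #F := by
  rw [← card_image_of_injective {v | (x, v) ∈ F} (Prod.mk_right_injective x),
    ← card_image_of_injective {p ∈ A.erase x | (p, u) ∈ F} (Prod.mk_left_injective u),
    ← card_union_of_disjoint (by grind [disjoint_left]),
    ← card_union_of_disjoint (by grind [disjoint_left])]
  exact card_le_card (by grind)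

lemma matchCount_twoCliques_add_two_le (hF : F ⊆ A ×ˢ Aᶜ) (hx : x ∈ A) {p : V}
    (hpu : (p, u) ∈ F) (hpx : p ≠ x) (t : ℕ) :
    matchCount (twoCliques A F) (t + 2) ≤ matchCount (isolate ⊤ ({x} : Set V)) (t + 2) +
      #F * matchCount (isolate ⊤ ({x, u} : Set V)) (t + 1) := by
  obtain ⟨hpA, hu⟩ : p ∈ A ∧ u ∉ A := by simpa using hF hpu
  set κ := matchCount (isolate ⊤ ({x, u} : Set V)) (t + 1)
  have hm : 1 ≤ #{p ∈ A.erase x | (p, u) ∈ F} := card_pos.2 ⟨p, by grind⟩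
  have hD : ∑ v with (x, v) ∈ F, matchCount (isolate (twoCliques A F) {x, v}) (t + 1) ≤
      #{v | (x, v) ∈ F} * κ := by
    refine sum_le_card_nsmul _ _ _ fun v hv => ?_
    have hvA : v ∉ A := mem_compl.1 (mem_product.1 (hF (mem_filter_univ v |>.1 hv))).2
    exact (matchCount_mono (isolate_mono le_top _) _).trans
      (matchCount_isolate_top_pair_le (ne_of_mem_of_not_mem hx hvA).symm _)
  calc matchCount (twoCliques A F) (t + 2)
      ≤ _ := matchCount_twoCliques_succ_le hF hx (t + 1)
    _ ≤ matchCount (isolate ⊤ ({x} : Set V)) (t + 2) + (#{v | (x, v) ∈ F} +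
          #{p ∈ A.erase x | (p, u) ∈ F} + #{f ∈ F | f.1 ≠ x ∧ f.2 ≠ u}) * κ := by
        linarith [sum_matchCount_isolate_twoCliques_pair_le (x := x) hF hu t,
          mul_add_sum_matchCount_isolate_twoCliques_le hF hx hu hm t,
          matchCount_isolate_twoCliques_singleton_add_sum_le hF hx hu (t + 1)]
    _ ≤ _ := by
        gcongr
        exact card_filter_fst_add_card_filter_snd_add_card_filter_le F A x u

lemma matchCount_twoCliques_one_lt (hF : F ⊆ A ×ˢ Aᶜ) (hx : x ∈ A) (hA : A.Nontrivial)
    (hA' : Aᶜ.Nontrivial) :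
    matchCount (twoCliques A F) 1 < matchCount (isolate ⊤ ({x} : Set V)) 1 + #F := by
  have hexpand := matchCount_twoCliques_succ_le hF hx 0
  have hnonedges := matchCount_isolate_twoCliques_add_sum_le hF (S := {x})
    (E := (A.erase x ×ˢ Aᶜ) \ F) (by grind) sdiff_disjoint (by grind [mem_compl]) 0
  simp only [matchCount_zero, ← card_eq_sum_ones, zero_add] at hexpand hnonedges
  have hcount : #(A.erase x ×ˢ Aᶜ) + #{v | (x, v) ∈ F} ≤ #((A.erase x ×ˢ Aᶜ) \ F) + #F := by
    rw [← card_image_of_injective {v | (x, v) ∈ F} (Prod.mk_right_injective x),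
      ← card_union_of_disjoint (by grind [disjoint_left]), card_sdiff_add_card]
    exact card_le_card (by grind)
  have hlt : #(A.erase x) < #(A.erase x ×ˢ Aᶜ) := by
    rw [card_product]
    exact lt_mul_of_one_lt_right (hA.erase_nonempty.card_pos) (one_lt_card_iff_nontrivial.2 hA')
  omega

lemma matchCount_twoCliques_le {N : Finset V} (hF : F ⊆ A ×ˢ Aᶜ) (hx : x ∈ A)
    (hA' : Aᶜ.Nontrivial) {p : V} (hpu : (p, u) ∈ F) (hpx : p ≠ x) (hxN : x ∉ N) (hN : #N = #F) :
    (∀ t, matchCount (twoCliques A F) t ≤ matchCount (twoCliques {x} ({x} ×ˢ N)) t) ∧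
      matchCount (twoCliques A F) 1 < matchCount (twoCliques {x} ({x} ×ˢ N)) 1 := by
  obtain ⟨hpA, hu⟩ : p ∈ A ∧ u ∉ A := by simpa using hF hpu
  have hstar := add_card_mul_le_matchCount_twoCliques_singleton hxN
    (ne_of_mem_of_not_mem hx hu).symm
  have hlt : matchCount (twoCliques A F) 1 < matchCount (twoCliques {x} ({x} ×ˢ N)) 1 := by
    refine (matchCount_twoCliques_one_lt hF hx ⟨p, hpA, x, hx, hpx⟩ hA').trans_le ?_
    simpa only [matchCount_zero, mul_one, hN] using hstar 0
  refine ⟨fun t => ?_, hlt⟩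
  match t with
  | 0 => simp only [matchCount_zero, le_refl]
  | 1 => exact hlt.le
  | t + 2 => exact (matchCount_twoCliques_add_two_le hF hx hpu hpx t).trans (hN ▸ hstar (t + 1))

lemma exists_le_twoCliques {G : SimpleGraph V} [DecidableRel G.Adj] {k : ℕ}
    (hcut : #(G.interedges A Aᶜ) ≤ k) (hk : k ≤ #A * #Aᶜ) :
    ∃ F ⊆ A ×ˢ Aᶜ, #F = k ∧ G ≤ twoCliques A F := by
  obtain ⟨F, hGF, hFA, hFk⟩ := exists_subsuperset_card_eq
    (filter_subset _ _ : G.interedges A Aᶜ ⊆ A ×ˢ Aᶜ) hcut (by rwa [card_product])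
  refine ⟨F, hFA, hFk, fun v w hvw => ?_⟩
  have hmem {a b : V} (ha : a ∈ A) (hb : b ∉ A) (hab : G.Adj a b) : (a, b) ∈ F :=
    hGF (G.mem_interedges_iff.2 ⟨ha, mem_compl.2 hb, hab⟩)
  simp only [twoCliques, SimpleGraph.fromRel_adj]
  grind [hvw.ne, hvw.symm]

end TwoCliques

section Kstar

variable {V : Type*} [Fintype V]

lemma exists_equiv_fin_val_lt_iff {n : ℕ} (hn : Fintype.card V = n)
    {x : V} {N : Finset V} (hxN : x ∉ N) :
    ∃ e : V ≃ Fin n, (∀ v, (e v).val < #N ↔ v ∈ N) ∧ (e x).val = n - 1 := by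
  classical
  have hNn : #N < n := hn ▸ card_lt_univ_of_notMem hxN
  let e₀ : V ≃ Fin n := Fintype.equivFinOfCardEq hn
  have hcard : Fintype.card {i // i ∈ N.map e₀.toEmbedding} =
      Fintype.card {i : Fin n // i.val < #N} := by
    rw [Fintype.card_coe, card_map, Fintype.card_subtype, Fin.card_filter_val_lt,
      min_eq_right hNn.le]
  let σ := (Fintype.equivOfCardEq hcard).extendSubtype
  have hσ (v : V) : (σ (e₀ v)).val < #N ↔ v ∈ N := by
    refine ⟨fun h => ?_, fun h =>
      Equiv.extendSubtype_mem (Fintype.equivOfCardEq hcard) (e₀ v) (by simpa)⟩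
    by_contra hv
    exact Equiv.extendSubtype_not_mem (Fintype.equivOfCardEq hcard) (e₀ v) (by simpa) h
  let last : Fin n := ⟨n - 1, by omega⟩
  refine ⟨(e₀.trans σ).trans (Equiv.swap (σ (e₀ x)) last), fun v => ?_, by simp [last]⟩
  have hx : ¬(σ (e₀ x)).val < #N := (hσ x).not.2 hxN
  have hlast : ¬last.val < #N := by grind
  rw [← hσ v]
  simp only [Equiv.trans_apply, Equiv.swap_apply_def]
  grind

lemma nonempty_twoCliques_iso_Kstar {n : ℕ} (hn : Fintype.card V = n) {x : V} {N : Finset V}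
    (hxN : x ∉ N) : Nonempty (twoCliques {x} ({x} ×ˢ N) ≃g Kstar n #N) := by
  classical
  obtain ⟨e, heN, hex⟩ := exists_equiv_fin_val_lt_iff hn hxN
  have heq (v : V) : (e v).val = n - 1 ↔ v = x := by
    rw [← hex, ← Fin.ext_iff, e.injective.eq_iff]
  have hlt (v : V) : (e v).val < n - 1 ↔ v ≠ x := by
    rw [ne_eq, ← heq]
    omega
  refine ⟨e, fun {v w} => ?_⟩
  simp only [Kstar, twoCliques, SimpleGraph.fromRel_adj, e.injective.ne_iff, heN, heq, hlt,
    mem_singleton, mem_product]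
  grind

end Kstar

lemma exists_card_interedges_le_edgeConn {V : Type*} [Fintype V] [DecidableEq V] [Nontrivial V]
    (G : SimpleGraph V) [DecidableRel G.Adj] :
    ∃ A : Finset V, A.Nonempty ∧ Aᶜ.Nonempty ∧ #(G.interedges A Aᶜ) ≤ edgeConn G := by
  classical
  have hcuts : {j | ∃ F : Set (Sym2 V), F ⊆ G.edgeSet ∧ F.ncard = j ∧
      ¬(G.deleteEdges F).Connected}.Nonempty :=
    ⟨_, G.edgeSet, subset_rfl, rfl, by
      simpa using SimpleGraph.not_connected_bot⟩
  obtain ⟨F, -, hFcard, hF⟩ := Nat.sInf_mem hcuts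
  obtain ⟨a, b, hab⟩ : ∃ a b, ¬(G.deleteEdges F).Reachable a b := by
    by_contra! h
    exact hF ⟨h⟩
  refine ⟨({v | (G.deleteEdges F).Reachable a v} : Finset V), ⟨a, by simp⟩, ⟨b, by simpa⟩, ?_⟩
  rw [edgeConn, ← hFcard, Set.ncard_eq_toFinset_card' F]
  refine card_le_card_of_injOn (fun f => s(f.1, f.2)) (fun f hf => ?_) ?_
  · simp only [mem_coe, G.mem_interedges_iff, mem_compl, mem_filter_univ] at hf
    by_contra hfF
    refine hf.2.1 (hf.1.trans (SimpleGraph.Adj.reachable ?_))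
    exact SimpleGraph.deleteEdges_adj.2 ⟨hf.2.2, by simpa using hfF⟩
  · intro f hf g hg h
    simp only [mem_coe, G.mem_interedges_iff, mem_compl, mem_filter_univ] at hf hg
    grind [Sym2.eq_iff]

section Extremal

variable {V : Type*} [Fintype V] {G : SimpleGraph V} {n k : ℕ}

lemma matchCount_twoCliques_le_Kstar (hn : Fintype.card V = n) {x : V} {N : Finset V}
    (hxN : x ∉ N) (t : ℕ) :
    matchCount (twoCliques {x} ({x} ×ˢ N)) t ≤ matchCount (Kstar n #N) t := by
  obtain ⟨φ⟩ := nonempty_twoCliques_iso_Kstar hn hxN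
  exact matchCount_le_of_embedding φ.toEquiv.toEmbedding (fun _ _ h => φ.map_adj_iff.2 h) t

lemma matchCount_le_Kstar_of_singleton [DecidableEq V] [DecidableRel G.Adj]
    (hn : Fintype.card V = n) (hk : k ≤ n - 1) (hniso : ¬Nonempty (G ≃g Kstar n k)) {x : V}
    (hcut : #(G.interedges {x} {x}ᶜ) ≤ k) :
    (∀ t, matchCount G t ≤ matchCount (Kstar n k) t) ∧
      matchCount G 1 < matchCount (Kstar n k) 1 := by
  obtain ⟨F, hF, rfl, hGF⟩ := exists_le_twoCliques hcut (by
    rwa [card_singleton, one_mul, card_compl, card_singleton, hn])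
  rw [singleton_product] at hF
  obtain ⟨N, hN, rfl⟩ := subset_map_iff.1 hF
  have hxN : x ∉ N := fun hx => mem_compl.1 (hN hx) (mem_singleton_self x)
  rw [card_map] at hniso ⊢
  rw [← singleton_product] at hGF
  have hlt : G < twoCliques {x} ({x} ×ˢ N) := by
    refine hGF.lt_of_ne ?_
    rintro rfl
    exact hniso (nonempty_twoCliques_iso_Kstar hn hxN)
  exact ⟨fun t => (matchCount_mono hGF t).trans (matchCount_twoCliques_le_Kstar hn hxN t),
    (matchCount_one_lt_of_lt hlt).trans_le (matchCount_twoCliques_le_Kstar hn hxN 1)⟩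

lemma matchCount_le_Kstar_of_nontrivial [DecidableEq V] [DecidableRel G.Adj]
    (hn : Fintype.card V = n) (hk1 : 1 ≤ k) (hk2 : k ≤ n - 1) {A : Finset V}
    (hA : A.Nontrivial) (hA' : Aᶜ.Nontrivial) (hcut : #(G.interedges A Aᶜ) ≤ k) :
    (∀ t, matchCount G t ≤ matchCount (Kstar n k) t) ∧
      matchCount G 1 < matchCount (Kstar n k) 1 := by
  have hk : k ≤ #A * #Aᶜ := by
    have := one_lt_card_iff_nontrivial.2 hA
    have := one_lt_card_iff_nontrivial.2 hA'
    have := card_add_card_compl A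
    exact hk2.trans (by nlinarith [Nat.sub_le n 1])
  obtain ⟨F, hF, rfl, hGF⟩ := exists_le_twoCliques hcut hk
  obtain ⟨⟨p, u⟩, hpu⟩ := card_pos.1 hk1
  obtain ⟨x, hx, hxp⟩ := hA.exists_ne p
  obtain ⟨N, hNx, hN⟩ := exists_subset_card_eq (s := univ.erase x) (n := #F) (by
    rwa [card_erase_of_mem (mem_univ x), card_univ, hn])
  have hxN : x ∉ N := fun h => notMem_erase x univ (hNx h)
  have hle := matchCount_twoCliques_le hF hx hA' hpu hxp.symm hxN hN
  have hKstar (t : ℕ) := hN ▸ matchCount_twoCliques_le_Kstar hn hxN t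
  exact ⟨fun t => (matchCount_mono hGF t).trans ((hle.1 t).trans (hKstar t)),
    (matchCount_mono hGF 1).trans_lt (hle.2.trans_le (hKstar 1))⟩

end Extremal

theorem stmt17_general {V : Type*} [Fintype V] (G : SimpleGraph V) (n k : ℕ)
    (hn : Fintype.card V = n) (hk : edgeConn G ≤ k) (hk1 : 1 ≤ k) (hk2 : k ≤ n - 1)
    (hniso : ¬Nonempty (G ≃g Kstar n k)) :
    (∀ t, matchCount G t ≤ matchCount (Kstar n k) t) ∧
      matchCount G 1 < matchCount (Kstar n k) 1 := by
  classical
  have : Nontrivial V := Fintype.one_lt_card_iff_nontrivial.1 (by omega)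
  obtain ⟨A, hA, hA', hcut⟩ := exists_card_interedges_le_edgeConn G
  replace hcut := hcut.trans hk
  rcases hA.exists_eq_singleton_or_nontrivial with ⟨x, rfl⟩ | hA
  · exact matchCount_le_Kstar_of_singleton hn hk2 hniso hcut
  rcases hA'.exists_eq_singleton_or_nontrivial with ⟨x, hx⟩ | hA'
  · have := G.symm
    rw [SimpleGraph.interedges, Rel.card_interedges_comm, hx, ← compl_compl A, hx] at hcut
    exact matchCount_le_Kstar_of_singleton hn hk2 hniso hcut
  · exact matchCount_le_Kstar_of_nontrivial hn hk1 hk2 hA hA' hcut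

/-- Main theorem: if `G` is connected of order `n ≥ 2` with edge connectivity `k`
(`1 ≤ k ≤ n − 1`) and `G ≇ K^k_{n-1,1}`, then `m(G,t) ≤ m(K^k_{n-1,1},t)` for all
`t ≤ ⌊n/2⌋`, with strict inequality for at least one such `t`. -/
theorem stmt17 {V : Type*} [Fintype V] (G : SimpleGraph V) (n k : ℕ)
    (hn : Fintype.card V = n) (hn2 : 2 ≤ n) (hG : G.Connected)
    (hk : edgeConn G = k) (hk1 : 1 ≤ k) (hk2 : k ≤ n - 1)
    (hniso : ¬ Nonempty (G ≃g Kstar n k)) :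
    (∀ t : ℕ, t ≤ n / 2 → matchCount G t ≤ matchCount (Kstar n k) t) ∧
    (∃ t : ℕ, t ≤ n / 2 ∧ matchCount G t < matchCount (Kstar n k) t) := by
  obtain ⟨hle, hlt⟩ := stmt17_general G n k hn hk.le hk1 hk2 hniso
  exact ⟨fun t _ => hle t, 1, by omega, hlt⟩
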